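/- For 2 ≤ t ≤ min{m,n}, the ideal of O_q(M_{m,n})[X_{1n}⁻¹] generated by the t×t quantum minors of X equals the ideal generated by the (t−1)×(t−1) quantum minors of the matrix X' (whose entries are X'_{ij} = X_{ij} − q⁻¹X_{1j}X_{in}X_{1n}⁻¹). -/

import Mathlib

noncomputable section
open scoped BigOperators

/-- The defining relations of an `m × n` `q`-quantum matrix. -/
def IsQMat {k A : Type*} [Field k] [Ring A] [Algebra k A] (q : k) {m n : ℕ}
    (X : Fin m → Fin n → A) : Prop :=
  (∀ (i : Fin m) (j l : Fin n), j < l → X i j * X i l = q • (X i l * X i j)) ∧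
  (∀ (i r : Fin m) (j : Fin n), i < r → X i j * X r j = q • (X r j * X i j)) ∧
  (∀ (i r : Fin m) (j l : Fin n), i < r → j < l → X i l * X r j = X r j * X i l) ∧
  (∀ (i r : Fin m) (j l : Fin n), i < r → j < l →
    X i j * X r l - X r l * X i j = (q - q⁻¹) • (X i l * X r j))

/-- The relations defining `O_q(M_{m,n})` as a quotient of the free algebra. -/
inductive QMRel (k : Type*) [Field k] (q : k) (m n : ℕ) :
    FreeAlgebra k (Fin m × Fin n) → FreeAlgebra k (Fin m × Fin n) → Prop
  | row (i : Fin m) (j l : Fin n) (h : j < l) :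
      QMRel k q m n (FreeAlgebra.ι k (i, j) * FreeAlgebra.ι k (i, l))
        (q • (FreeAlgebra.ι k (i, l) * FreeAlgebra.ι k (i, j)))
  | col (i r : Fin m) (j : Fin n) (h : i < r) :
      QMRel k q m n (FreeAlgebra.ι k (i, j) * FreeAlgebra.ι k (r, j))
        (q • (FreeAlgebra.ι k (r, j) * FreeAlgebra.ι k (i, j)))
  | anti (i r : Fin m) (j l : Fin n) (h1 : i < r) (h2 : j < l) :
      QMRel k q m n (FreeAlgebra.ι k (i, l) * FreeAlgebra.ι k (r, j))
        (FreeAlgebra.ι k (r, j) * FreeAlgebra.ι k (i, l))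
  | diag (i r : Fin m) (j l : Fin n) (h1 : i < r) (h2 : j < l) :
      QMRel k q m n (FreeAlgebra.ι k (i, j) * FreeAlgebra.ι k (r, l))
        (FreeAlgebra.ι k (r, l) * FreeAlgebra.ι k (i, j) +
          (q - q⁻¹) • (FreeAlgebra.ι k (i, l) * FreeAlgebra.ι k (r, j)))

/-- The quantum matrix algebra `O_q(M_{m,n})`. -/
abbrev OqM (k : Type*) [Field k] (q : k) (m n : ℕ) := RingQuot (QMRel k q m n)

/-- The canonical generators `X_{ij}` of `O_q(M_{m,n})`. -/
def qX (k : Type*) [Field k] (q : k) (m n : ℕ) (i : Fin m) (j : Fin n) : OqM k q m n :=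
  RingQuot.mkAlgHom k (QMRel k q m n) (FreeAlgebra.ι k (i, j))

/-- The number of inversions (the length `ℓ(σ)`) of a permutation of `Fin t`. -/
def invCount {t : ℕ} (σ : Equiv.Perm (Fin t)) : ℕ :=
  Finset.card (Finset.univ.filter (fun p : Fin t × Fin t => p.1 < p.2 ∧ σ p.2 < σ p.1))

/-- The quantum determinant of a `t × t` matrix with entries in an algebra:
`Σ_σ (-q)^{ℓ(σ)} M_{1,σ(1)} ⋯ M_{t,σ(t)}`. -/
def qdet {k : Type*} [Field k] {A : Type*} [Ring A] [Algebra k A] (q : k) {t : ℕ}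
    (M : Fin t → Fin t → A) : A :=
  ∑ σ : Equiv.Perm (Fin t), ((-q) ^ invCount σ) • (List.ofFn (fun i => M i (σ i))).prod

/-- The quantum minor `[I|J]` of the matrix `X` on rows `I` and columns `J`. -/
def qminor {k : Type*} [Field k] {A : Type*} [Ring A] [Algebra k A] (q : k) {m n t : ℕ}
    (X : Fin m → Fin n → A) (I : Finset (Fin m)) (J : Finset (Fin n))
    (hI : I.card = t) (hJ : J.card = t) : A :=
  qdet q (fun a b => X (I.orderIsoOfFin hI a) (J.orderIsoOfFin hJ b))

/-- The elements `X'_{ij} = X_{ij} - q⁻¹ X_{1j} X_{in} X_{1n}⁻¹` in a localisation of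
`O_q(M_{m,n})` at the normal element `X_{1n}`, where `φ` is the localisation map and
`u = X_{1n}⁻¹`. -/
def Xp {k B : Type*} [Field k] [Ring B] [Algebra k B] (q : k) {m n : ℕ}
    (hm : 0 < m) (hn : 0 < n) (φ : OqM k q m n →ₐ[k] B) (u : B)
    (i : Fin m) (j : Fin n) : B :=
  φ (qX k q m n i j) -
    q⁻¹ • (φ (qX k q m n ⟨0, hm⟩ j) * φ (qX k q m n i ⟨n - 1, by omega⟩) * u)


section Helpers
namespace QHelp

variable {k B : Type*} [Field k] [Ring B] [Algebra k B]

/-- The space on which the quantum exterior algebra acts. -/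
abbrev VV (B : Type*) (n : ℕ) := Finset (Fin n) → B

/-- Left multiplication by the exterior generator. -/
def eOp (q : k) {n : ℕ} (j : Fin n) : Module.End k (VV B n) where
  toFun v J := if j ∈ J then ((-q) ^ (J.filter (· < j)).card) • v (J.erase j) else 0
  map_add' v w := by
    funext J; by_cases h : j ∈ J <;> simp [h]
  map_smul' c v := by
    funext J
    by_cases h : j ∈ J
    · simp only [h, if_true, Pi.smul_apply, RingHom.id_apply]
      rw [smul_comm]
    · simp [h]

/-- Left multiplication by a scalar of `B`. -/
def mOp (k : Type*) {B : Type*} [Field k] [Ring B] [Algebra k B] (n : ℕ) :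
    B →ₐ[k] Module.End k (VV B n) := Algebra.lsmul k k (VV B n)

lemma mOp_apply {n : ℕ} (b : B) (v : VV B n) (J) : mOp k n b v J = b * v J := rfl

lemma eOp_apply (q : k) {n : ℕ} (j : Fin n) (v : VV B n) (J) :
    eOp q j v J = if j ∈ J then ((-q) ^ (J.filter (· < j)).card) • v (J.erase j) else 0 := rfl

lemma eOp_mOp (q : k) {n : ℕ} (j : Fin n) (b : B) :
    eOp q j * mOp k n b = mOp k n b * eOp q j := by
  refine LinearMap.ext fun v => funext fun J => ?_
  simp only [Module.End.mul_apply, eOp_apply, mOp_apply]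
  split_ifs <;> simp

lemma eOp_sq (q : k) {n : ℕ} (j : Fin n) :
    (eOp q j * eOp q j : Module.End k (VV B n)) = 0 := by
  refine LinearMap.ext fun v => funext fun J => ?_
  simp [Module.End.mul_apply, eOp_apply]

lemma eOp_anti (q : k) {n : ℕ} {j l : Fin n} (h : j < l) :
    (eOp q l * eOp q j : Module.End k (VV B n)) = (-q) • (eOp q j * eOp q l) := by
  refine LinearMap.ext fun v => funext fun J => ?_
  simp only [Module.End.mul_apply, eOp_apply, LinearMap.smul_apply, Pi.smul_apply,
    Finset.mem_erase, ne_eq, h.ne, h.ne', not_false_eq_true, true_and]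
  by_cases hl : l ∈ J <;> by_cases hj : j ∈ J <;> simp only [hl, hj, if_true, if_false, smul_zero]
  have h1 : ((J.erase l).filter (· < j)) = J.filter (· < j) := by
    ext x; simp only [Finset.mem_filter, Finset.mem_erase]
    constructor
    · tauto
    · rintro ⟨a, b⟩; exact ⟨⟨(b.trans h).ne, a⟩, b⟩
  have h2 : ((J.erase j).filter (· < l)) = (J.filter (· < l)).erase j := by
    ext x; simp only [Finset.mem_filter, Finset.mem_erase]; tauto
  have h3 : ((J.filter (· < l)).erase j).card + 1 = (J.filter (· < l)).card :=
    Finset.card_erase_add_one (by simp [hj, h])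
  rw [h1, h2, ← h3, Finset.erase_right_comm, smul_smul, smul_smul, smul_smul]
  congr 1; ring

/-- Left multiplication by a row element. -/
def LL (q : k) {n : ℕ} (x : Fin n → B) : Module.End k (VV B n) :=
  ∑ j, mOp k n (x j) * eOp q j

lemma LL_apply (q : k) {n : ℕ} (x : Fin n → B) (v : VV B n) (J) :
    LL q x v J = ∑ j ∈ J, ((-q) ^ (J.filter (· < j)).card) • (x j * v (J.erase j)) := by
  simp only [LL, LinearMap.sum_apply, Finset.sum_apply, Module.End.mul_apply, mOp_apply, eOp_apply]
  rw [← Finset.sum_subset (Finset.subset_univ J)]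
  · apply Finset.sum_congr rfl
    intro j hj; simp [hj]
  · intro j _ hj; simp [hj]

lemma LL_mul (q : k) {n : ℕ} (x y : Fin n → B) :
    LL q x * LL q y = ∑ j, ∑ l, if j < l then
      mOp k n (x j * y l - q • (x l * y j)) * (eOp q j * eOp q l) else 0 := by
  have h0 : LL q x * LL q y = ∑ j, ∑ l, mOp k n (x j * y l) * (eOp q j * eOp q l) := by
    simp only [LL, Finset.sum_mul_sum]
    refine Finset.sum_congr rfl fun j _ => Finset.sum_congr rfl fun l _ => ?_
    rw [mul_assoc, ← mul_assoc (eOp q j), eOp_mOp, map_mul]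
    simp only [mul_assoc]
  rw [h0]
  have h1 : ∀ j l : Fin n, mOp k n (x j * y l) * (eOp q j * eOp q l) =
      (if j < l then mOp k n (x j * y l) * (eOp q j * eOp q l) else 0) +
      (if l < j then mOp k n (x j * y l) * (eOp q j * eOp q l) else 0) := by
    intro j l
    rcases lt_trichotomy j l with h | h | h
    · rw [if_pos h, if_neg h.not_gt, add_zero]
    · subst h; rw [eOp_sq]; simp
    · rw [if_pos h, if_neg h.not_gt, zero_add]
  rw [Finset.sum_congr rfl fun j _ => Finset.sum_congr rfl fun l _ => h1 j l]
  simp only [Finset.sum_add_distrib]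
  conv_lhs => rw [add_comm, Finset.sum_comm, add_comm]
  rw [← Finset.sum_add_distrib]
  refine Finset.sum_congr rfl fun j _ => ?_
  rw [← Finset.sum_add_distrib]
  refine Finset.sum_congr rfl fun l _ => ?_
  split_ifs with h
  · rw [eOp_anti q h, map_sub, map_smul, sub_mul, mul_smul_comm, smul_mul_assoc]
    module
  · simp

lemma LL_sq (q : k) {n : ℕ} (x : Fin n → B) (h : ∀ j l, j < l → x j * x l = q • (x l * x j)) :
    LL q x * LL q x = 0 := by
  rw [LL_mul]
  refine Finset.sum_eq_zero fun j _ => Finset.sum_eq_zero fun l _ => ?_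
  split_ifs with hh
  · rw [h j l hh, sub_self, map_zero, zero_mul]
  · rfl

lemma LL_anti (q : k) {n : ℕ} (x y : Fin n → B)
    (h : ∀ j l, j < l → y j * x l - q • (y l * x j) = (-q) • (x j * y l - q • (x l * y j))) :
    LL q y * LL q x = (-q) • (LL q x * LL q y) := by
  rw [LL_mul, LL_mul, Finset.smul_sum]
  refine Finset.sum_congr rfl fun j _ => ?_
  rw [Finset.smul_sum]
  refine Finset.sum_congr rfl fun l _ => ?_
  split_ifs with hh
  · rw [h j l hh, map_smul, smul_mul_assoc]
  · simp

/-- The vacuum. -/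
def vac (B : Type*) [Ring B] (n : ℕ) : VV B n := fun J => if J = ∅ then 1 else 0

/-- Permutation with first value `p` and the rest from `τ`. -/
def consPerm {t : ℕ} (x : Fin (t + 1) × Equiv.Perm (Fin t)) : Equiv.Perm (Fin (t + 1)) :=
  Equiv.ofBijective (Fin.cons x.1 (fun i => x.1.succAbove (x.2 i)) : Fin (t + 1) → Fin (t + 1)) (by
    rw [← Finite.injective_iff_bijective, Fin.cons_injective_iff]
    refine ⟨?_, fun a b hab => by simpa using hab⟩
    rintro ⟨i, hi⟩
    exact Fin.succAbove_ne _ _ hi)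

lemma consPerm_zero {t : ℕ} (x : Fin (t + 1) × Equiv.Perm (Fin t)) : consPerm x 0 = x.1 := rfl
lemma consPerm_succ {t : ℕ} (x : Fin (t + 1) × Equiv.Perm (Fin t)) (i : Fin t) :
    consPerm x i.succ = x.1.succAbove (x.2 i) := rfl

lemma consPerm_bij {t : ℕ} : Function.Bijective (consPerm (t := t)) := by
  rw [Fintype.bijective_iff_injective_and_card]
  constructor
  · rintro ⟨p, τ⟩ ⟨p', τ'⟩ h
    have h0 : p = p' := by
      have := congrArg (fun σ => σ 0) h
      simpa [consPerm_zero] using this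
    subst h0
    congr 1
    ext i
    have := congrArg (fun σ => σ i.succ) h
    simp only [consPerm_succ] at this
    exact congrArg _ (Fin.succAbove_right_injective this)
  · simp [Fintype.card_perm, Nat.factorial_succ]

lemma card_lt_succAbove {t : ℕ} (p : Fin (t + 1)) :
    (∑ i : Fin t, if p.succAbove i < p then 1 else 0) = (p : ℕ) := by
  rw [← Finset.card_filter]
  have : (Finset.univ.filter (fun i : Fin t => p.succAbove i < p)) =
      Finset.univ.filter (fun i : Fin t => (i : ℕ) < p) := by
    ext i
    simp only [Finset.mem_filter, Finset.mem_univ, true_and, Fin.succAbove_lt_iff_castSucc_lt]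
    rfl
  rw [this, Fin.card_filter_val_lt]
  omega

lemma invCount_eq {t : ℕ} (σ : Equiv.Perm (Fin t)) :
    invCount σ = ∑ a, ∑ b, if a < b ∧ σ b < σ a then 1 else 0 := by
  rw [invCount, Finset.card_filter, Fintype.sum_prod_type]

lemma invCount_consPerm {t : ℕ} (x : Fin (t + 1) × Equiv.Perm (Fin t)) :
    invCount (consPerm x) = x.1 + invCount x.2 := by
  rw [invCount_eq, invCount_eq, Fin.sum_univ_succ, Fin.sum_univ_succ]
  simp only [Fin.sum_univ_succ (n := t), consPerm_zero, consPerm_succ, Fin.succ_lt_succ_iff,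
    Fin.not_lt_zero, false_and, if_false, zero_add, Fin.succ_pos, true_and, lt_irrefl,
    Fin.succAbove_lt_succAbove_iff]
  congr 1
  rw [← card_lt_succAbove x.1]
  exact Equiv.sum_comp x.2 (fun i => if x.1.succAbove i < x.1 then 1 else 0)

lemma qdet_succ (q : k) {t : ℕ} (M : Fin (t + 1) → Fin (t + 1) → B) :
    qdet q M = ∑ p : Fin (t + 1), ((-q) ^ (p : ℕ)) •
      (M 0 p * qdet q (fun a b => M a.succ (p.succAbove b))) := by
  rw [qdet, ← Function.Bijective.sum_comp (consPerm_bij (t := t)), Fintype.sum_prod_type]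
  refine Finset.sum_congr rfl fun p _ => ?_
  rw [qdet, Finset.mul_sum, Finset.smul_sum]
  refine Finset.sum_congr rfl fun τ _ => ?_
  rw [invCount_consPerm, List.ofFn_succ, List.prod_cons, mul_smul_comm, smul_smul, pow_add]
  simp only [consPerm_zero, consPerm_succ]

lemma qdet_zero_col (q : k) {t : ℕ} (M : Fin t → Fin t → B) (b : Fin t) (h : ∀ a, M a b = 0) :
    qdet q M = 0 := by
  refine Finset.sum_eq_zero fun σ _ => ?_
  rw [List.prod_eq_zero, smul_zero]
  rw [List.mem_ofFn]
  exact ⟨σ.symm b, by simp [h]⟩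

/-- Word of row elements. -/
def word (q : k) {n t : ℕ} (x : Fin t → Fin n → B) : Module.End k (VV B n) :=
  (List.ofFn (fun a => LL q (x a))).prod

lemma word_succ (q : k) {n t : ℕ} (x : Fin (t + 1) → Fin n → B) :
    word q x = LL q (x 0) * word q (fun a => x a.succ) := by
  rw [word, List.ofFn_succ, List.prod_cons]; rfl

lemma word_vac_ne (q : k) {n t : ℕ} (x : Fin t → Fin n → B) (J : Finset (Fin n))
    (hJ : J.card ≠ t) : word q x (vac B n) J = 0 := by
  induction t generalizing J with
  | zero =>
    have : J ≠ ∅ := by rintro rfl; simp at hJ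
    simp [word, vac, this]
  | succ t ih =>
    rw [word_succ, Module.End.mul_apply, LL_apply]
    refine Finset.sum_eq_zero fun j hj => ?_
    rw [ih, mul_zero, smul_zero]
    have := Finset.card_erase_add_one hj
    omega

lemma word_vac (q : k) {n t : ℕ} (x : Fin t → Fin n → B) (J : Finset (Fin n))
    (hJ : J.card = t) : word q x (vac B n) J = qdet q (fun a b => x a (J.orderEmbOfFin hJ b)) := by
  induction t generalizing J with
  | zero =>
    have : J = ∅ := by simpa using hJ
    simp [word, vac, this, qdet, invCount]
  | succ t ih =>
    rw [word_succ, Module.End.mul_apply, LL_apply, qdet_succ]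
    symm
    refine Finset.sum_bij (fun p _ => J.orderEmbOfFin hJ p) ?_ ?_ ?_ ?_
    · intro p _; exact Finset.orderEmbOfFin_mem _ _ _
    · intro p _ p' _ h; simpa using h
    · intro j hj
      have : j ∈ Set.range (J.orderEmbOfFin hJ) := by simpa using hj
      obtain ⟨p, hp⟩ := this
      exact ⟨p, Finset.mem_univ _, hp⟩
    · intro p _
      have hmem := Finset.orderEmbOfFin_mem J hJ p
      have hc : (J.erase (J.orderEmbOfFin hJ p)).card = t := by
        have := Finset.card_erase_add_one hmem; omega
      rw [ih _ _ hc]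
      have hcard : (J.filter (· < J.orderEmbOfFin hJ p)).card = (p : ℕ) := by
        have : J.filter (· < J.orderEmbOfFin hJ p) =
            (Finset.univ.filter (· < p)).map (J.orderEmbOfFin hJ).toEmbedding := by
          ext x
          simp only [Finset.mem_filter, Finset.mem_map, Finset.mem_univ, true_and]
          constructor
          · rintro ⟨hx, hlt⟩
            have : x ∈ Set.range (J.orderEmbOfFin hJ) := by simpa using hx
            obtain ⟨y, rfl⟩ := this
            exact ⟨y, by simpa using hlt, rfl⟩
          · rintro ⟨y, hy, rfl⟩
            exact ⟨Finset.orderEmbOfFin_mem _ _ _, by simpa using hy⟩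
        rw [this, Finset.card_map]
        have h2 : (Finset.univ.filter (· < p)) = Finset.Iio p := by ext; simp
        rw [h2, Fin.card_Iio]
      rw [hcard]
      have hemb : (fun b => J.orderEmbOfFin hJ (p.succAbove b)) =
          (J.erase (J.orderEmbOfFin hJ p)).orderEmbOfFin hc := by
        apply Finset.orderEmbOfFin_unique
        · intro b
          refine Finset.mem_erase.2 ⟨?_, Finset.orderEmbOfFin_mem _ _ _⟩
          intro h
          simp at h
        · exact (J.orderEmbOfFin hJ).strictMono.comp (Fin.strictMono_succAbove p)
      rw [← hemb]

section Abstract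
variable {ι R : Type*} [Ring R] [Algebra k R]

lemma abs_sandwich (ρ : ι → R) (hcomm : ∀ a b, ∃ s : k, ρ a * ρ b = s • (ρ b * ρ a))
    (hsq : ∀ a, ρ a * ρ a = 0) (a : ι) (P : List ι) : ρ a * (P.map ρ).prod * ρ a = 0 := by
  induction P with
  | nil => simp [hsq]
  | cons b P ih =>
    obtain ⟨s, hs⟩ := hcomm a b
    rw [List.map_cons, List.prod_cons, ← mul_assoc, hs, smul_mul_assoc, smul_mul_assoc,
      mul_assoc, mul_assoc, ← mul_assoc (ρ a), ih, mul_zero, smul_zero]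

lemma abs_perm (ρ : ι → R) (hcomm : ∀ a b, ∃ s : k, ρ a * ρ b = s • (ρ b * ρ a))
    {P Q : List ι} (h : P.Perm Q) : ∃ s : k, (P.map ρ).prod = s • (Q.map ρ).prod := by
  induction h with
  | nil => exact ⟨1, by simp⟩
  | cons a _ ih =>
    obtain ⟨s, hs⟩ := ih
    exact ⟨s, by simp [hs]⟩
  | swap a b l =>
    obtain ⟨s, hs⟩ := hcomm b a
    refine ⟨s, ?_⟩
    simp only [List.map_cons, List.prod_cons, ← mul_assoc]
    rw [hs, smul_mul_assoc]
  | trans _ _ ih1 ih2 =>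
    obtain ⟨s, hs⟩ := ih1
    obtain ⟨s', hs'⟩ := ih2
    exact ⟨s * s', by rw [hs, hs', smul_smul]⟩

lemma abs_prime (ρ ρ' C : ι → R) (hcomm : ∀ a b, ∃ s : k, ρ a * ρ b = s • (ρ b * ρ a))
    (hsq : ∀ a, ρ a * ρ a = 0) (z : ι) (hρ' : ∀ a, ρ' a = ρ a - ρ z * C a) (P Q : List ι) :
    ρ z * (P.map ρ).prod * (Q.map ρ').prod = ρ z * (P.map ρ).prod * (Q.map ρ).prod := by
  induction Q generalizing P with
  | nil => simp
  | cons r Q ih =>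
    have h1 : ρ z * (P.map ρ).prod * ρ' r = ρ z * ((P ++ [r]).map ρ).prod := by
      rw [hρ', mul_sub, ← mul_assoc _ (ρ z), abs_sandwich ρ hcomm hsq]
      simp [mul_assoc]
    rw [List.map_cons, List.map_cons, List.prod_cons, List.prod_cons, ← mul_assoc, h1, ih]
    simp [mul_assoc]

variable {V : Type*} [AddCommGroup V] [Module k V]

lemma abs_D {m s : ℕ} (ρ ρ' C : Fin (m + 1) → Module.End k V)
    (hcomm : ∀ a b, ∃ s : k, ρ a * ρ b = s • (ρ b * ρ a))
    (hsq : ∀ a, ρ a * ρ a = 0) (hρ' : ∀ a, ρ' a = ρ a - ρ 0 * C a)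
    (W : Submodule k V) (δ : V)
    (hWρ : ∀ a, ∀ v ∈ W, ρ a v ∈ W)
    (hE : ∀ Q : List (Fin (m + 1)), Q.Pairwise (· < ·) → (∀ a ∈ Q, 0 < a) → Q.length = s →
      (Q.map ρ').prod δ ∈ W)
    (P : List (Fin (m + 1))) (hP : P.length = s) : (ρ 0 * (P.map ρ).prod) δ ∈ W := by
  by_cases hn : (0 :: P).Nodup
  · rw [List.nodup_cons] at hn
    have hperm : P.Perm (P.toFinset.sort (· ≤ ·)) := by
      refine (List.perm_of_nodup_nodup_toFinset_eq (Finset.sort_nodup _ _) hn.2 ?_).symm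
      simp
    obtain ⟨c, hc⟩ := abs_perm ρ hcomm hperm
    rw [hc, mul_smul_comm]
    refine W.smul_mem _ ?_
    have h := abs_prime ρ ρ' C hcomm hsq 0 hρ' [] (P.toFinset.sort (· ≤ ·))
    simp only [List.map_nil, List.prod_nil, mul_one] at h
    rw [← h, Module.End.mul_apply]
    refine hWρ _ _ (hE _ ?_ ?_ ?_)
    · exact (Finset.sortedLT_sort _).pairwise
    · intro a ha
      have : a ∈ P := by simpa using ha
      refine Fin.pos_of_ne_zero ?_
      rintro rfl; exact hn.1 this
    · rw [← hperm.length_eq, hP]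
  · have : (ρ 0 * (P.map ρ).prod) = 0 := by
      rw [List.nodup_iff_sublist] at hn
      push Not at hn
      obtain ⟨a, ha⟩ := hn
      obtain ⟨l, hl⟩ := ha.exists_perm_append
      obtain ⟨c, hc⟩ := abs_perm ρ hcomm hl
      have h2 : (([a, a] ++ l).map ρ).prod = 0 := by
        simp only [List.cons_append, List.nil_append, List.map_cons, List.prod_cons, ← mul_assoc,
          hsq, zero_mul]
      rw [h2, smul_zero] at hc
      simpa using hc
    rw [this]; simp

lemma abs_C {m s : ℕ} (ρ ρ' C : Fin (m + 1) → Module.End k V)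
    (hcomm : ∀ a b, ∃ s : k, ρ a * ρ b = s • (ρ b * ρ a))
    (hsq : ∀ a, ρ a * ρ a = 0) (hρ' : ∀ a, ρ' a = ρ a - ρ 0 * C a)
    (W : Submodule k V) (δ : V)
    (hWρ : ∀ a, ∀ v ∈ W, ρ a v ∈ W)
    (hE : ∀ Q : List (Fin (m + 1)), Q.Pairwise (· < ·) → (∀ a ∈ Q, 0 < a) → Q.length = s →
      (Q.map ρ').prod δ ∈ W)
    (hC : ∀ P : List (Fin (m + 1)), ∀ a, (P.map ρ).prod δ ∈ W → (P.map ρ).prod (C a δ) ∈ W)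
    (κ : k) (hcom : ∀ a r, 0 < a → a < r → C a * ρ' r = ρ' r * C a + κ • (ρ' a * C r))
    (Q P : List (Fin (m + 1))) (a : Fin (m + 1)) (ha : 0 < a)
    (hQ : (a :: Q).Pairwise (· < ·)) (hP : P.length + Q.length = s) :
    (ρ 0 * (P.map ρ).prod * C a * (Q.map ρ').prod) δ ∈ W := by
  induction Q generalizing P a with
  | nil =>
    have h1 := abs_D ρ ρ' C hcomm hsq hρ' W δ hWρ hE P (by simpa using hP)
    have h2 := hC (0 :: P) a (by simpa using h1)
    simpa using h2
  | cons r Q ih =>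
    have hpr : ∀ b, ρ 0 * (P.map ρ).prod * ρ' b = ρ 0 * ((P ++ [b]).map ρ).prod := by
      intro b
      have := abs_prime ρ ρ' C hcomm hsq 0 hρ' P [b]
      simpa [mul_assoc] using this
    have hlt : a < r := (List.pairwise_cons.1 hQ).1 r (by simp)
    have hQ' := (List.pairwise_cons.1 hQ).2
    have haQ : (a :: Q).Pairwise (· < ·) := hQ.sublist (by simp)
    have e : ρ 0 * (P.map ρ).prod * C a * ((r :: Q).map ρ').prod =
        ρ 0 * ((P ++ [r]).map ρ).prod * C a * (Q.map ρ').prod +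
        κ • (ρ 0 * ((P ++ [a]).map ρ).prod * C r * (Q.map ρ').prod) := by
      rw [← hpr, ← hpr, List.map_cons, List.prod_cons, ← mul_assoc, mul_assoc _ (C a),
        hcom a r ha hlt]
      simp only [mul_add, add_mul, mul_smul_comm, smul_mul_assoc, mul_assoc]
    simp only [List.length_cons] at hP
    rw [e, LinearMap.add_apply, LinearMap.smul_apply]
    refine W.add_mem (ih _ _ ha haQ (by simp; omega)) (W.smul_mem _ (ih _ _ (ha.trans hlt) hQ' (by simp; omega)))

lemma abs_F {m s : ℕ} (ρ ρ' C : Fin (m + 1) → Module.End k V)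
    (hcomm : ∀ a b, ∃ s : k, ρ a * ρ b = s • (ρ b * ρ a))
    (hsq : ∀ a, ρ a * ρ a = 0) (hρ' : ∀ a, ρ' a = ρ a - ρ 0 * C a)
    (W : Submodule k V) (δ : V)
    (hWρ : ∀ a, ∀ v ∈ W, ρ a v ∈ W) (hWρ' : ∀ a, ∀ v ∈ W, ρ' a v ∈ W)
    (hE : ∀ Q : List (Fin (m + 1)), Q.Pairwise (· < ·) → (∀ a ∈ Q, 0 < a) → Q.length = s →
      (Q.map ρ').prod δ ∈ W)
    (hC : ∀ P : List (Fin (m + 1)), ∀ a, (P.map ρ).prod δ ∈ W → (P.map ρ).prod (C a δ) ∈ W)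
    (κ : k) (hcom : ∀ a r, 0 < a → a < r → C a * ρ' r = ρ' r * C a + κ • (ρ' a * C r))
    (P Q : List (Fin (m + 1))) (hPQ : (P ++ Q).Pairwise (· < ·)) (h0 : ∀ a ∈ P ++ Q, 0 < a)
    (hl : P.length + Q.length = s + 1) :
    ((P.map ρ).prod * (Q.map ρ').prod) δ ∈ W := by
  induction P using List.reverseRecOn generalizing Q with
  | nil =>
    match Q, hPQ, h0, hl with
    | [], _, _, hl => simp at hl
    | a :: Q, hPQ, h0, hl =>
      simp only [List.nil_append] at hPQ h0
      simp only [List.map_nil, List.prod_nil, one_mul, List.map_cons, List.prod_cons,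
        Module.End.mul_apply]
      refine hWρ' _ _ (hE _ (List.pairwise_cons.1 hPQ).2 (fun b hb => h0 b (by simp [hb])) ?_)
      simpa using hl
  | append_singleton P a ih =>
    have hs : ∃ c : k, (P.map ρ).prod * ρ 0 = c • (ρ 0 * (P.map ρ).prod) := by
      obtain ⟨c, hc⟩ := abs_perm ρ hcomm (P := P ++ [0]) (Q := 0 :: P)
        (List.perm_append_comm)
      exact ⟨c, by simpa using hc⟩
    obtain ⟨c, hc⟩ := hs
    have ha : 0 < a := h0 a (by simp)
    have e : ((P ++ [a]).map ρ).prod * (Q.map ρ').prod =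
        (P.map ρ).prod * ((a :: Q).map ρ').prod +
        c • (ρ 0 * (P.map ρ).prod * C a * (Q.map ρ').prod) := by
      rw [← smul_mul_assoc, ← smul_mul_assoc, ← hc]
      simp only [List.map_append, List.prod_append, List.map_cons, List.prod_cons, List.map_nil,
        List.prod_nil, mul_one, hρ' a]
      noncomm_ring
    simp only [List.append_assoc, List.singleton_append] at hPQ h0
    simp only [List.length_append, List.length_cons, List.length_nil] at hl
    rw [e, LinearMap.add_apply, LinearMap.smul_apply]
    refine W.add_mem (ih _ hPQ h0 (by simp; omega)) (W.smul_mem _ ?_)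
    exact abs_C ρ ρ' C hcomm hsq hρ' W δ hWρ hE hC κ hcom Q P a ha
      (hPQ.sublist (List.sublist_append_right _ _)) (by omega)

lemma abs_main {m s : ℕ} (ρ ρ' C : Fin (m + 1) → Module.End k V)
    (hcomm : ∀ a b, ∃ s : k, ρ a * ρ b = s • (ρ b * ρ a))
    (hsq : ∀ a, ρ a * ρ a = 0) (hρ' : ∀ a, ρ' a = ρ a - ρ 0 * C a)
    (W : Submodule k V) (δ : V)
    (hWρ : ∀ a, ∀ v ∈ W, ρ a v ∈ W) (hWρ' : ∀ a, ∀ v ∈ W, ρ' a v ∈ W)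
    (hE : ∀ Q : List (Fin (m + 1)), Q.Pairwise (· < ·) → (∀ a ∈ Q, 0 < a) → Q.length = s →
      (Q.map ρ').prod δ ∈ W)
    (hC : ∀ P : List (Fin (m + 1)), ∀ a, (P.map ρ).prod δ ∈ W → (P.map ρ).prod (C a δ) ∈ W)
    (κ : k) (hcom : ∀ a r, 0 < a → a < r → C a * ρ' r = ρ' r * C a + κ • (ρ' a * C r))
    (P : List (Fin (m + 1))) (hP : P.Pairwise (· < ·)) (hl : P.length = s + 1) :
    ((P.map ρ).prod) δ ∈ W := by
  match P, hP, hl with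
  | a :: P, hP, hl =>
    by_cases ha : a = 0
    · subst ha
      have := abs_D ρ ρ' C hcomm hsq hρ' W δ hWρ hE P (by simpa using hl)
      simpa using this
    · have h := abs_F ρ ρ' C hcomm hsq hρ' W δ hWρ hWρ' hE hC κ hcom (a :: P) [] (by simpa using hP)
        (by
          intro b hb
          have ha' := Fin.pos_of_ne_zero ha
          simp only [List.append_nil, List.mem_cons] at hb
          rcases hb with rfl | hb
          · exact ha'
          · exact ha'.trans ((List.pairwise_cons.1 hP).1 b hb)) (by simpa using hl)
      simpa using h

end Abstract

section Concrete
variable {m n : ℕ}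

/-- The modified matrix. -/
def xp (q : k) (X : Fin (m + 1) → Fin (n + 1) → B) (u : B) (i : Fin (m + 1)) (j : Fin (n + 1)) : B :=
  X i j - q⁻¹ • (X 0 j * X i (Fin.last n) * u)

/-- The coefficients. -/
def cI (q : k) (X : Fin (m + 1) → Fin (n + 1) → B) (u : B) (i : Fin (m + 1)) : B :=
  q⁻¹ • (X i (Fin.last n) * u)

lemma LL_mOp (q : k) {n : ℕ} (x : Fin n → B) (c : B) :
    LL q x * mOp k n c = LL q (fun j => x j * c) := by
  simp only [LL, Finset.sum_mul, mul_assoc, eOp_mOp, map_mul]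

lemma mOp_LL (q : k) {n : ℕ} (x : Fin n → B) (c : B) :
    mOp k n c * LL q x = LL q (fun j => c * x j) := by
  simp only [LL, Finset.mul_sum, mul_assoc, map_mul]

lemma LL_add (q : k) {n : ℕ} (x y : Fin n → B) :
    LL q x + LL q y = LL q (fun j => x j + y j) := by
  simp only [LL, map_add, add_mul, Finset.sum_add_distrib]

lemma LL_sub (q : k) {n : ℕ} (x y : Fin n → B) :
    LL q x - LL q y = LL q (fun j => x j - y j) := by
  simp only [LL, map_sub, sub_mul, Finset.sum_sub_distrib]

lemma LL_smul (q : k) {n : ℕ} (s : k) (x : Fin n → B) :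
    s • LL q x = LL q (fun j => s • x j) := by
  simp only [LL, map_smul, Finset.smul_sum, smul_mul_assoc]

lemma xp_LL (q : k) (X : Fin (m + 1) → Fin (n + 1) → B) (u : B) (i) :
    LL q (xp q X u i) = LL q (X i) - LL q (X 0) * mOp k (n + 1) (cI q X u i) := by
  rw [LL_mOp, LL_sub]
  congr 1
  funext j
  simp only [xp, cI, mul_smul_comm, mul_assoc]

lemma LL_comm (q : k) (hq : q ≠ 0) (X : Fin (m + 1) → Fin (n + 1) → B) (hX : IsQMat q X)
    (a b : Fin (m + 1)) : ∃ s : k, LL q (X a) * LL q (X b) = s • (LL q (X b) * LL q (X a)) := by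
  have key : ∀ a b, a < b → LL q (X b) * LL q (X a) = (-q) • (LL q (X a) * LL q (X b)) := by
    intro a b hab
    apply LL_anti
    intro j l hjl
    have h3 := hX.2.2.1 a b j l hab hjl
    have h4 := hX.2.2.2 a b j l hab hjl
    rw [sub_eq_iff_eq_add] at h4
    rw [h4, ← h3]
    have : (q : k) * q⁻¹ = 1 := mul_inv_cancel₀ hq
    match_scalars <;> field_simp <;> ring
  rcases lt_trichotomy a b with h | h | h
  · exact ⟨(-q)⁻¹, by rw [key a b h, smul_smul, inv_mul_cancel₀ (neg_ne_zero.2 hq), one_smul]⟩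
  · exact ⟨1, by rw [h, one_smul]⟩
  · exact ⟨-q, key b a h⟩

lemma xp_last (q : k) (hq : q ≠ 0) (X : Fin (m + 1) → Fin (n + 1) → B) (hX : IsQMat q X) (u : B)
    (hu1 : X 0 (Fin.last n) * u = 1) (i : Fin (m + 1)) (hi : 0 < i) :
    xp q X u i (Fin.last n) = 0 := by
  rw [xp, hX.2.1 0 i _ hi, smul_mul_assoc, smul_smul, inv_mul_cancel₀ hq, one_smul, mul_assoc, hu1,
    mul_one, sub_self]

lemma inv_rel (q : k) (hq : q ≠ 0) (z u x : B) (h1 : z * u = 1) (h2 : u * z = 1) (s : k)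
    (h : z * x = s • (x * z)) : x * u = s • (u * x) := by
  calc x * u = u * (z * x) * u := by rw [← mul_assoc u, h2, one_mul]
    _ = s • (u * x * (z * u)) := by rw [h]; simp [mul_assoc]
    _ = _ := by rw [h1, mul_one]

lemma elem_comm (q : k) (hq : q ≠ 0) (a b d z y w u : B) (h1 : z * u = 1) (h2 : u * z = 1)
    (az : a * z = q • (z * a)) (zy : z * y = q • (y * z)) (zw : z * w = q • (w * z))
    (yw : y * w = q • (w * y)) (zb : z * b = b * z) (zd : z * d = d * z) (yd : y * d = d * y)
    (ay : a * y - y * a = (q - q⁻¹) • (z * b)) :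
    (q⁻¹ • (y * u)) * (d - q⁻¹ • (a * w * u)) = (d - q⁻¹ • (a * w * u)) * (q⁻¹ • (y * u)) +
      (q - q⁻¹) • ((b - q⁻¹ • (a * y * u)) * (q⁻¹ • (w * u))) := by
  have yu : y * u = q • (u * y) := inv_rel q hq z u y h1 h2 q zy
  have wu : w * u = q • (u * w) := inv_rel q hq z u w h1 h2 q zw
  have bu : b * u = u * b := by simpa using inv_rel q hq z u b h1 h2 1 (by simpa using zb)
  have du : d * u = u * d := by simpa using inv_rel q hq z u d h1 h2 1 (by simpa using zd)
  have ua : u * a = q • (a * u) := by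
    calc u * a = u * (a * z) * u := by rw [mul_assoc, mul_assoc, h1, mul_one]
      _ = q • (u * z * (a * u)) := by rw [az]; simp [mul_assoc]
      _ = _ := by rw [h2, one_mul]
  have hc : ∀ x : B, x * u = q • (u * x) → q⁻¹ • (x * u) = u * x := by
    intro x hx; rw [hx, smul_smul, inv_mul_cancel₀ hq, one_smul]
  have haw : q⁻¹ • (a * w * u) = a * (u * w) := by rw [mul_assoc, ← mul_smul_comm, hc w wu]
  have hay : q⁻¹ • (a * y * u) = a * (u * y) := by rw [mul_assoc, ← mul_smul_comm, hc y yu]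
  rw [hc y yu, hc w wu, haw, hay]
  have ayy : y * a = a * y - (q - q⁻¹) • (z * b) := by rw [← ay]; abel
  have ud' : ∀ x v : B, x * u = u * x → v * u = q • (u * v) →
      (x - a * (u * v)) * u = u * (x - a * (u * v)) := by
    intro x v hx hv
    rw [sub_mul, mul_sub, hx, ← mul_assoc u a, ua]
    simp only [mul_assoc, hv, mul_smul_comm, smul_mul_assoc]
  rw [← mul_assoc (d - _) u y, ← mul_assoc (b - _) u w, ud' d w du wu, ud' b y bu yu]
  simp only [mul_assoc]
  rw [← mul_smul_comm, ← mul_add]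
  congr 1
  have e1 : y * (a * (u * w)) = q • (a * (u * (y * w))) - (q - q⁻¹) • (b * w) := by
    rw [← mul_assoc y, ayy, sub_mul, mul_assoc, ← mul_assoc y, yu, smul_mul_assoc, zb]
    simp only [mul_assoc, mul_smul_comm, smul_mul_assoc]
    rw [← mul_assoc z u, h1, one_mul]
  have e2 : a * (u * (w * y)) = q⁻¹ • (a * (u * (y * w))) := by
    rw [yw, mul_smul_comm, mul_smul_comm, smul_smul, inv_mul_cancel₀ hq, one_smul]
  rw [mul_sub, sub_mul, sub_mul, e1, yd]
  simp only [mul_assoc]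
  rw [e2]
  module

lemma conc_com (q : k) (hq : q ≠ 0) (X : Fin (m + 1) → Fin (n + 1) → B) (hX : IsQMat q X) (u : B)
    (hu1 : X 0 (Fin.last n) * u = 1) (hu2 : u * X 0 (Fin.last n) = 1)
    (a r : Fin (m + 1)) (ha : 0 < a) (har : a < r) :
    mOp k (n + 1) (cI q X u a) * LL q (xp q X u r) = LL q (xp q X u r) * mOp k (n + 1) (cI q X u a)
      + (q - q⁻¹) • (LL q (xp q X u a) * mOp k (n + 1) (cI q X u r)) := by
  rw [LL_mOp, LL_mOp, mOp_LL, LL_smul, LL_add]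
  congr 1
  funext j
  have hr := ha.trans har
  by_cases hj : j = Fin.last n
  · subst hj
    simp [xp_last q hq X hX u hu1 _ ha, xp_last q hq X hX u hu1 _ hr]
  · have hj' : j < Fin.last n := Fin.lt_last_iff_ne_last.2 hj
    exact elem_comm q hq (X 0 j) (X a j) (X r j) (X 0 (Fin.last n)) (X a (Fin.last n))
      (X r (Fin.last n)) u hu1 hu2 (hX.1 _ _ _ hj') (hX.2.1 _ _ _ ha) (hX.2.1 _ _ _ hr)
      (hX.2.1 _ _ _ har) (hX.2.2.1 _ _ _ _ ha hj') (hX.2.2.1 _ _ _ _ hr hj')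
      (hX.2.2.1 _ _ _ _ har hj') (hX.2.2.2 _ _ _ _ ha hj')

/-- Vectors with all coefficients in a two-sided ideal. -/
def WK (k : Type*) {B : Type*} [Field k] [Ring B] [Algebra k B] (n : ℕ) (K : TwoSidedIdeal B) :
    Submodule k (VV B n) where
  carrier := {v | ∀ J, v J ∈ K}
  add_mem' ha hb J := K.add_mem (ha J) (hb J)
  zero_mem' _ := K.zero_mem
  smul_mem' c v hv J := by
    rw [Pi.smul_apply, Algebra.smul_def]
    exact K.mul_mem_left _ _ (hv J)

lemma K_smul (K : TwoSidedIdeal B) (c : k) {x : B} (h : x ∈ K) : c • x ∈ K := by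
  rw [Algebra.smul_def]; exact K.mul_mem_left _ _ h

lemma WK_LL (q : k) {n : ℕ} (K : TwoSidedIdeal B) (x : Fin n → B) (v : VV B n)
    (hv : v ∈ WK k n K) : LL q x v ∈ WK k n K := by
  intro J
  rw [LL_apply]
  exact sum_mem fun j _ => K_smul K _ (K.mul_mem_left _ _ (hv _))

lemma right_mul (q : k) {n : ℕ} (l : List (Fin n → B)) (v : VV B n) (c : B) :
    (l.map (LL q)).prod (fun J => v J * c) = fun J => (l.map (LL q)).prod v J * c := by
  induction l with
  | nil => rfl
  | cons x l ih =>
    rw [List.map_cons, List.prod_cons, Module.End.mul_apply, ih]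
    funext J
    rw [Module.End.mul_apply, LL_apply, LL_apply, Finset.sum_mul]
    simp only [smul_mul_assoc, mul_assoc]

lemma mOp_vac {n : ℕ} (c : B) : mOp k n c (vac B n) = fun J => vac B n J * c := by
  funext J
  rw [mOp_apply]
  simp only [vac]
  split_ifs <;> simp

lemma word_last (q : k) {s : ℕ} (x : Fin s → Fin (n + 1) → B) (hx : ∀ a, x a (Fin.last n) = 0)
    (J : Finset (Fin (n + 1))) (hJ : Fin.last n ∈ J) : word q x (vac B (n + 1)) J = 0 := by
  by_cases hc : J.card = s
  · rw [word_vac q x J hc]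
    have : Fin.last n ∈ Set.range (J.orderEmbOfFin hc) := by simpa using hJ
    obtain ⟨b, hb⟩ := this
    exact qdet_zero_col q _ b (fun a => by rw [hb, hx])
  · exact word_vac_ne q x J hc

lemma qminor_eq (q : k) {m n s : ℕ} (X : Fin m → Fin n → B) (I J) (hI : I.card = s)
    (hJ : J.card = s) : qminor q X I J hI hJ =
      qdet q (fun a b => X (I.orderEmbOfFin hI a) (J.orderEmbOfFin hJ b)) := rfl

lemma emb_castSucc {s : ℕ} (J' : Finset (Fin n)) (hJ' : J'.card = s)
    (hJ : (J'.map Fin.castSuccEmb).card = s) (b) :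
    (J'.map Fin.castSuccEmb).orderEmbOfFin hJ b = (J'.orderEmbOfFin hJ' b).castSucc := by
  have := Finset.orderEmbOfFin_unique hJ (f := fun b => (J'.orderEmbOfFin hJ' b).castSucc)
    (fun b => by simp) (fun a b hab => by simpa using hab)
  exact (congrFun this b).symm

/-- Words in the primed rows give minors of the primed matrix. -/
lemma word_xp (q : k) {s : ℕ} (X : Fin (m + 1) → Fin (n + 1) → B) (u : B)
    (I' : Finset (Fin m)) (J' : Finset (Fin n)) (hI' : I'.card = s) (hJ' : J'.card = s) :
    word q (fun a => xp q X u (I'.orderEmbOfFin hI' a).succ) (vac B (n + 1)) (J'.map Fin.castSuccEmb)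
      = qminor q (fun a b => xp q X u a.succ b.castSucc) I' J' hI' hJ' := by
  have hJ : (J'.map Fin.castSuccEmb).card = s := by simpa using hJ'
  rw [word_vac q _ _ hJ, qminor_eq]
  simp only [emb_castSucc J' hJ' hJ]

lemma conc_E (q : k) (hq : q ≠ 0) (X : Fin (m + 1) → Fin (n + 1) → B) (hX : IsQMat q X) (u : B)
    (hu1 : X 0 (Fin.last n) * u = 1) (s : ℕ) (K : TwoSidedIdeal B)
    (hK : ∀ I' J' (hI' : I'.card = s) (hJ' : J'.card = s),
      qminor q (fun (a : Fin m) (b : Fin n) => xp q X u a.succ b.castSucc) I' J' hI' hJ' ∈ K)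
    (Q : List (Fin (m + 1))) (hQ : Q.Pairwise (· < ·)) (h0 : ∀ a ∈ Q, 0 < a) (hl : Q.length = s) :
    (Q.map (fun a => LL q (xp q X u a))).prod (vac B (n + 1)) ∈ WK k (n + 1) K := by
  subst hl
  have hw : (Q.map (fun a => LL q (xp q X u a))).prod = word q (fun a => xp q X u (Q.get a)) := by
    rw [word]
    congr 1
    conv_lhs => rw [← List.ofFn_get Q, List.map_ofFn]
    rfl
  rw [hw]
  intro J
  by_cases hlast : Fin.last n ∈ J
  · rw [word_last q _ (fun a => xp_last q hq X hX u hu1 _ (h0 _ (List.get_mem _ _))) J hlast]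
    exact K.zero_mem
  by_cases hc : J.card = Q.length
  swap
  · rw [word_vac_ne q _ _ hc]; exact K.zero_mem
  let J' : Finset (Fin n) := Finset.univ.filter (fun b => b.castSucc ∈ J)
  have hJJ : J = J'.map Fin.castSuccEmb := by
    ext x
    simp only [J', Finset.mem_map, Finset.mem_filter, Finset.mem_univ, true_and]
    constructor
    · intro hx
      have hne : x ≠ Fin.last n := by rintro rfl; exact hlast hx
      obtain ⟨y, rfl⟩ := Fin.exists_castSucc_eq.2 hne
      exact ⟨y, hx, rfl⟩
    · rintro ⟨y, hy, rfl⟩; exact hy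
  let I' : Finset (Fin m) := Finset.univ.filter (fun b => b.succ ∈ Q)
  have hII : Q.toFinset = I'.map (Fin.succEmb m) := by
    ext x
    simp only [I', Finset.mem_map, Finset.mem_filter, Finset.mem_univ, true_and, List.mem_toFinset]
    constructor
    · intro hx
      obtain ⟨y, rfl⟩ := Fin.exists_succ_eq.2 (h0 x hx).ne'
      exact ⟨y, hx, rfl⟩
    · rintro ⟨y, hy, rfl⟩; exact hy
  have hnd : Q.Nodup := hQ.imp (fun h => h.ne)
  have hQc : Q.toFinset.card = Q.length := List.toFinset_card_of_nodup hnd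
  have hI' : I'.card = Q.length := by rw [← hQc, hII, Finset.card_map]
  have hJ' : J'.card = Q.length := by rw [← hc, hJJ, Finset.card_map]
  have e1 : Q.get = Q.toFinset.orderEmbOfFin hQc :=
    Finset.orderEmbOfFin_unique hQc (fun a => by simp)
      (fun a b hab => List.pairwise_iff_get.1 hQ a b hab)
  have e2 : (fun a => (I'.orderEmbOfFin hI' a).succ) = Q.toFinset.orderEmbOfFin hQc := by
    apply Finset.orderEmbOfFin_unique hQc
    · intro a
      rw [hII]
      exact Finset.mem_map.2 ⟨_, Finset.orderEmbOfFin_mem I' hI' a, rfl⟩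
    · intro a b hab; simpa using hab
  have e3 : (fun a => xp q X u (Q.get a)) = (fun a => xp q X u (I'.orderEmbOfFin hI' a).succ) := by
    funext a
    rw [e1, ← e2]
  rw [e3]
  conv => rw [hJJ]
  rw [word_xp q X u I' J' hI' hJ']
  exact hK I' J' hI' hJ'

lemma conc_main (q : k) (hq : q ≠ 0) (X : Fin (m + 1) → Fin (n + 1) → B) (hX : IsQMat q X) (u : B)
    (hu1 : X 0 (Fin.last n) * u = 1) (hu2 : u * X 0 (Fin.last n) = 1) (s : ℕ) (K : TwoSidedIdeal B)
    (hK : ∀ I' J' (hI' : I'.card = s) (hJ' : J'.card = s),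
      qminor q (fun (a : Fin m) (b : Fin n) => xp q X u a.succ b.castSucc) I' J' hI' hJ' ∈ K)
    (I J) (hI : I.card = s + 1) (hJ : J.card = s + 1) : qminor q X I J hI hJ ∈ K := by
  have h := abs_main (k := k) (s := s) (fun a => LL q (X a)) (fun a => LL q (xp q X u a))
    (fun a => mOp k (n + 1) (cI q X u a)) (LL_comm q hq X hX) (fun a => LL_sq q _ (hX.1 a))
    (xp_LL q X u) (WK k (n + 1) K) (vac B (n + 1)) (fun a v hv => WK_LL q K _ v hv)
    (fun a v hv => WK_LL q K _ v hv) (conc_E q hq X hX u hu1 s K hK)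
    (by
      intro P a hP
      have e : (P.map (fun a => LL q (X a))) = (P.map X).map (LL q) := by simp
      rw [e] at hP ⊢
      rw [mOp_vac, right_mul]
      intro J
      exact K.mul_mem_right _ _ (hP J))
    (q - q⁻¹) (conc_com q hq X hX u hu1 hu2) (List.ofFn (I.orderEmbOfFin hI))
    (by rw [List.pairwise_ofFn]; intro a b hab; simpa using hab) (by simp) J
  rw [List.map_ofFn] at h
  have h2 := word_vac q (fun a => X (I.orderEmbOfFin hI a)) J hJ
  rw [qminor_eq, ← h2]
  exact h

lemma conc_rev (q : k) (hq : q ≠ 0) (X : Fin (m + 1) → Fin (n + 1) → B) (hX : IsQMat q X) (u : B)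
    (hu1 : X 0 (Fin.last n) * u = 1) (hu2 : u * X 0 (Fin.last n) = 1) (s : ℕ) (T : TwoSidedIdeal B)
    (hT : ∀ I J (hI : I.card = s + 1) (hJ : J.card = s + 1), qminor q X I J hI hJ ∈ T)
    (I' : Finset (Fin m)) (J' : Finset (Fin n)) (hI' : I'.card = s) (hJ' : J'.card = s) :
    qminor q (fun (a : Fin m) (b : Fin n) => xp q X u a.succ b.castSucc) I' J' hI' hJ' ∈ T := by
  have hl : Fin.last n ∉ J'.map Fin.castSuccEmb := by
    simp [Fin.castSucc_ne_last]
  have h0 : (0 : Fin (m + 1)) ∉ I'.map (Fin.succEmb m) := by simp [Fin.succ_ne_zero]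
  let J := insert (Fin.last n) (J'.map Fin.castSuccEmb)
  let I := insert 0 (I'.map (Fin.succEmb m))
  have hJ : J.card = s + 1 := by
    rw [Finset.card_insert_of_notMem hl, Finset.card_map, hJ']
  have hI : I.card = s + 1 := by
    rw [Finset.card_insert_of_notMem h0, Finset.card_map, hI']
  have hm := hT I J hI hJ
  have hemb : (Fin.cons 0 (fun a => (I'.orderEmbOfFin hI' a).succ) : Fin (s + 1) → Fin (m + 1)) =
      I.orderEmbOfFin hI := by
    apply Finset.orderEmbOfFin_unique hI
    · intro a
      refine Fin.cases ?_ (fun a => ?_) a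
      · simp [I]
      · exact Finset.mem_insert_of_mem
          (Finset.mem_map.2 ⟨_, Finset.orderEmbOfFin_mem I' hI' a, rfl⟩)
    · intro a b
      refine Fin.cases ?_ (fun a => ?_) a
      · refine Fin.cases ?_ (fun b => ?_) b
        · simp
        · simp [Fin.succ_pos]
      · refine Fin.cases ?_ (fun b => ?_) b
        · simp
        · simp
  rw [qminor_eq, ← word_vac q (fun a => X (I.orderEmbOfFin hI a)) J hJ, ← hemb, word_succ] at hm
  simp only [Fin.cons_zero, Fin.cons_succ] at hm
  have hp := abs_prime (k := k) (fun a => LL q (X a)) (fun a => LL q (xp q X u a))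
    (fun a => mOp k (n + 1) (cI q X u a)) (LL_comm q hq X hX) (fun a => LL_sq q _ (hX.1 a))
    0 (xp_LL q X u) [] (List.ofFn (fun a => (I'.orderEmbOfFin hI' a).succ))
  rw [List.map_ofFn, List.map_ofFn] at hp
  simp only [List.map_nil, List.prod_nil, mul_one] at hp
  change LL q (X 0) * word q (fun a => xp q X u (I'.orderEmbOfFin hI' a).succ) =
    LL q (X 0) * word q (fun a => X (I'.orderEmbOfFin hI' a).succ) at hp
  rw [← hp, Module.End.mul_apply, LL_apply,
    Finset.sum_eq_single_of_mem (Fin.last n) (Finset.mem_insert_self _ _)] at hm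
  · rw [Finset.erase_insert hl, word_xp q X u I' J' hI' hJ'] at hm
    generalize (Finset.filter (· < Fin.last n) J).card = N at hm
    have h2 := T.mul_mem_left u _ (K_smul T ((-q) ^ N)⁻¹ hm)
    rw [smul_smul, inv_mul_cancel₀ (pow_ne_zero _ (neg_ne_zero.2 hq)), one_smul, ← mul_assoc, hu2,
      one_mul] at h2
    exact h2
  · intro j hj hne
    rw [word_last q _ (fun a => xp_last q hq X hX u hu1 _ (Fin.succ_pos _)), mul_zero, smul_zero]
    exact Finset.mem_erase.2 ⟨hne.symm, Finset.mem_insert_self _ _⟩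

lemma isQMat_qX (q : k) {m n : ℕ} (φ : OqM k q m n →ₐ[k] B) :
    IsQMat q (fun i j => φ (qX k q m n i j)) := by
  refine ⟨?_, ?_, ?_, ?_⟩
  · intro i j l h
    have := RingQuot.mkAlgHom_rel k (QMRel.row (k := k) (q := q) (m := m) i j l h)
    simp only [← map_mul, ← map_smul, qX, this]
  · intro i r j h
    have := RingQuot.mkAlgHom_rel k (QMRel.col (k := k) (q := q) (n := n) i r j h)
    simp only [← map_mul, ← map_smul, qX, this]
  · intro i r j l h h'
    have := RingQuot.mkAlgHom_rel k (QMRel.anti (k := k) (q := q) i r j l h h')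
    simp only [← map_mul, qX, this]
  · intro i r j l h h'
    have := RingQuot.mkAlgHom_rel k (QMRel.diag (k := k) (q := q) i r j l h h')
    simp only [← map_mul, ← map_smul, ← map_sub, qX, this]
    congr 2
    abel

end Concrete

end QHelp
end Helpers

/-- In `O_q(M_{m,n})[X_{1n}⁻¹]`, the ideal generated by the `t × t` quantum minors of `X`
equals the ideal generated by the `(t-1) × (t-1)` quantum minors of `X'`. -/
theorem localised_ideal_minors_eq_ideal_xprime_minors {k B : Type*} [Field k]
    [Ring B] [Algebra k B]
    (q : k) (hq : q ≠ 0) {m n : ℕ} (hm : 2 ≤ m) (hn : 2 ≤ n)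
    (φ : OqM k q m n →ₐ[k] B) (hφ : Function.Injective φ) (u : B)
    (hu1 : φ (qX k q m n ⟨0, by omega⟩ ⟨n - 1, by omega⟩) * u = 1)
    (hu2 : u * φ (qX k q m n ⟨0, by omega⟩ ⟨n - 1, by omega⟩) = 1)
    (hloc : ∀ b : B, ∃ (a : OqM k q m n) (p : ℕ), b = φ a * u ^ p)
    (t : ℕ) (ht1 : 2 ≤ t) (ht : t ≤ min m n) :
    TwoSidedIdeal.span {x : B |
        ∃ (I : Finset (Fin m)) (J : Finset (Fin n)) (hI : I.card = t) (hJ : J.card = t),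
          x = qminor q (fun i j => φ (qX k q m n i j)) I J hI hJ}
      = TwoSidedIdeal.span {x : B |
          ∃ (I' : Finset (Fin (m - 1))) (J' : Finset (Fin (n - 1)))
            (hI' : I'.card = t - 1) (hJ' : J'.card = t - 1),
            x = qminor q (fun (a : Fin (m - 1)) (b : Fin (n - 1)) =>
              Xp q (by omega) (by omega) φ u ⟨(a : ℕ) + 1, by have := a.isLt; omega⟩
                ⟨(b : ℕ), by have := b.isLt; omega⟩) I' J' hI' hJ'} := by
  obtain ⟨m, rfl⟩ : ∃ m', m = m' + 1 := ⟨m - 1, by omega⟩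
  obtain ⟨n, rfl⟩ : ∃ n', n = n' + 1 := ⟨n - 1, by omega⟩
  obtain ⟨s, rfl⟩ : ∃ s, t = s + 1 := ⟨t - 1, by omega⟩
  have hX := QHelp.isQMat_qX q φ
  apply le_antisymm
  · rw [TwoSidedIdeal.span_le]
    rintro x ⟨I, J, hI, hJ, rfl⟩
    refine QHelp.conc_main q hq _ hX u hu1 hu2 s _ ?_ I J hI hJ
    intro I' J' hI' hJ'
    exact TwoSidedIdeal.subset_span ⟨I', J', hI', hJ', rfl⟩
  · rw [TwoSidedIdeal.span_le]
    rintro x ⟨I', J', hI', hJ', rfl⟩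
    refine QHelp.conc_rev q hq _ hX u hu1 hu2 s _ ?_ I' J' hI' hJ'
    intro I J hI hJ
    exact TwoSidedIdeal.subset_span ⟨I, J, hI, hJ, rfl⟩
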